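/- arXiv:2004.05206 — 3 statements merged into one kernel-verified Lean document; each statement's English description precedes it below -/
import Mathlib

section
/- Let 0<p<1 and let (x_n)_{n∈ℕ} together with (x_n*)_{n∈ℕ} be a quasi-greedy basis of ℓ_p. Then the dual basis (x_n*) is equivalent to the unit vector system of c_0: there exist 0<c≤C<∞ such that for every finitely supported real sequence (a_n), c·max_n |a_n| ≤ ‖Σ_n a_n x_n*‖ ≤ C·max_n |a_n|, where ‖x*‖ := sup{|x*(f)| : f ∈ ℓ_p, ‖f‖_p ≤ 1}. -/
open scoped BigOperators

open scoped BigOperators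

/-- For `0 < p < 1`, membership in `ℓ_p`: the sequence `(|f j|^p)_j` is summable. -/
def MemLpSeq (p : ℝ) (f : ℕ → ℝ) : Prop := Summable fun j => |f j| ^ p

/-- The `p`-norm `‖f‖_p = (∑_j |f j|^p)^(1/p)`. -/
noncomputable def pNorm (p : ℝ) (f : ℕ → ℝ) : ℝ := (∑' j, |f j| ^ p) ^ (1 / p)

/-- `A` is a greedy set for the coefficient sequence `coef`. -/
def GreedySet (coef : ℕ → ℝ) (A : Finset ℕ) : Prop :=
  ∀ n ∈ A, ∀ k ∉ A, |coef k| ≤ |coef n|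

/-- `(x_n)` together with bounded linear functionals `(x_n^*)` is a basis of `ℓ_p`. -/
structure IsLpBasis (p : ℝ) (x : ℕ → ℕ → ℝ) (xs : ℕ → (ℕ → ℝ) → ℝ) : Prop where
  mem : ∀ n, MemLpSeq p (x n)
  map_add : ∀ n f g, MemLpSeq p f → MemLpSeq p g → xs n (f + g) = xs n f + xs n g
  map_smul : ∀ n (c : ℝ) (f : ℕ → ℝ), MemLpSeq p f → xs n (fun j => c * f j) = c * xs n f
  bdd : ∃ b : ℝ, ∀ n f, MemLpSeq p f → |xs n f| ≤ b * pNorm p f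
  biorth : ∀ m n, xs m (x n) = if m = n then (1 : ℝ) else 0
  dense : ∀ f, MemLpSeq p f → ∀ ε > 0, ∃ (A : Finset ℕ) (c : ℕ → ℝ),
    pNorm p (fun j => f j - ∑ n ∈ A, c n * x n j) < ε
  norm_lb : ∃ c > 0, ∀ n, c ≤ pNorm p (x n)
  norm_ub : ∃ C : ℝ, ∀ n, pNorm p (x n) ≤ C

/-- The basis is quasi-greedy: greedy projections are uniformly bounded. -/
def QuasiGreedy (p : ℝ) (x : ℕ → ℕ → ℝ) (xs : ℕ → (ℕ → ℝ) → ℝ) : Prop :=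
  ∃ C ≥ (1 : ℝ), ∀ f, MemLpSeq p f → ∀ A : Finset ℕ,
    GreedySet (fun n => xs n f) A →
    pNorm p (fun j => ∑ n ∈ A, xs n f * x n j) ≤ C * pNorm p f

noncomputable def PP (p : ℝ) (f : ℕ → ℝ) : ℝ := ∑' j, |f j| ^ p

theorem PP_nonneg (p : ℝ) (f : ℕ → ℝ) : 0 ≤ PP p f :=
  tsum_nonneg fun _ => Real.rpow_nonneg (abs_nonneg _) _

theorem pNorm_nonneg' (p : ℝ) (f : ℕ → ℝ) : 0 ≤ pNorm p f :=
  Real.rpow_nonneg (PP_nonneg p f) _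

theorem pNorm_rpow {p : ℝ} (hp0 : 0 < p) (f : ℕ → ℝ) : pNorm p f ^ p = PP p f := by
  change (PP p f ^ (1 / p)) ^ p = PP p f
  rw [← Real.rpow_mul (PP_nonneg p f), one_div_mul_cancel hp0.ne', Real.rpow_one]

theorem abs_add_rpow {p : ℝ} (hp0 : 0 < p) (hp1 : p < 1) (a b : ℝ) :
    |a + b| ^ p ≤ |a| ^ p + |b| ^ p :=
  (Real.rpow_le_rpow (abs_nonneg _) (abs_add_le a b) hp0.le).trans
    (Real.rpow_add_le_add_rpow (abs_nonneg _) (abs_nonneg _) hp0.le hp1.le)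

theorem mem_add {p : ℝ} (hp0 : 0 < p) (hp1 : p < 1) {f g : ℕ → ℝ}
    (hf : MemLpSeq p f) (hg : MemLpSeq p g) : MemLpSeq p (fun j => f j + g j) :=
  Summable.of_nonneg_of_le (fun _ => Real.rpow_nonneg (abs_nonneg _) _)
    (fun j => abs_add_rpow hp0 hp1 (f j) (g j)) (Summable.add hf hg)

theorem PP_add {p : ℝ} (hp0 : 0 < p) (hp1 : p < 1) {f g : ℕ → ℝ}
    (hf : MemLpSeq p f) (hg : MemLpSeq p g) : PP p (fun j => f j + g j) ≤ PP p f + PP p g := by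
  unfold PP
  rw [← Summable.tsum_add hf hg]
  exact Summable.tsum_le_tsum (fun j => abs_add_rpow hp0 hp1 (f j) (g j))
    (mem_add hp0 hp1 hf hg) (Summable.add hf hg)

theorem mem_smul {p : ℝ} (c : ℝ) {f : ℕ → ℝ}
    (hf : MemLpSeq p f) : MemLpSeq p (fun j => c * f j) := by
  unfold MemLpSeq
  simp_rw [abs_mul, Real.mul_rpow (abs_nonneg _) (abs_nonneg _)]
  exact Summable.mul_left _ hf

theorem PP_smul {p : ℝ} (c : ℝ) (f : ℕ → ℝ) :
    PP p (fun j => c * f j) = |c| ^ p * PP p f := by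
  unfold PP
  simp_rw [abs_mul, Real.mul_rpow (abs_nonneg _) (abs_nonneg _)]
  exact tsum_mul_left

theorem mem_sub {p : ℝ} (hp0 : 0 < p) (hp1 : p < 1) {f g : ℕ → ℝ}
    (hf : MemLpSeq p f) (hg : MemLpSeq p g) : MemLpSeq p (fun j => f j - g j) := by
  have := mem_add hp0 hp1 hf (mem_smul (-1) hg)
  convert this using 2
  ring

theorem PP_sub {p : ℝ} (hp0 : 0 < p) (hp1 : p < 1) {f g : ℕ → ℝ}
    (hf : MemLpSeq p f) (hg : MemLpSeq p g) : PP p (fun j => f j - g j) ≤ PP p f + PP p g := by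
  have h := PP_add hp0 hp1 hf (mem_smul (-1) hg)
  rw [PP_smul] at h
  simp only [abs_neg, abs_one, Real.one_rpow, one_mul] at h
  convert h using 3
  ring

theorem mem_zero {p : ℝ} (hp0 : 0 < p) : MemLpSeq p (fun _ => 0) := by
  unfold MemLpSeq
  simp only [abs_zero, Real.zero_rpow hp0.ne']
  exact summable_zero

theorem PP_zero {p : ℝ} (hp0 : 0 < p) : PP p (fun _ => 0) = 0 := by
  unfold PP
  simp only [abs_zero, Real.zero_rpow hp0.ne', tsum_zero]

theorem mem_sum {p : ℝ} (hp0 : 0 < p) (hp1 : p < 1) {y : ℕ → ℕ → ℝ}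
    (hy : ∀ n, MemLpSeq p (y n)) (c : ℕ → ℝ) (A : Finset ℕ) :
    MemLpSeq p (fun j => ∑ n ∈ A, c n * y n j) := by
  classical
  induction A using Finset.induction_on with
  | empty => simpa using mem_zero hp0
  | insert a A ha ih =>
    simp_rw [Finset.sum_insert ha]
    exact mem_add hp0 hp1 (mem_smul _ (hy a)) ih

theorem PP_sum {p : ℝ} (hp0 : 0 < p) (hp1 : p < 1) {y : ℕ → ℕ → ℝ}
    (hy : ∀ n, MemLpSeq p (y n)) (c : ℕ → ℝ) (A : Finset ℕ) :
    PP p (fun j => ∑ n ∈ A, c n * y n j) ≤ ∑ n ∈ A, |c n| ^ p * PP p (y n) := by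
  classical
  induction A using Finset.induction_on with
  | empty => simpa using (PP_zero hp0).le
  | insert a A ha ih =>
    simp_rw [Finset.sum_insert ha]
    refine (PP_add hp0 hp1 (mem_smul _ (hy a)) (mem_sum hp0 hp1 hy c A)).trans ?_
    rw [PP_smul]
    linarith

theorem mem_single {p : ℝ} (hp0 : 0 < p) (i : ℕ) : MemLpSeq p (Pi.single i 1) := by
  refine summable_of_ne_finset_zero (s := {i}) ?_
  intro b hb
  rw [Finset.mem_singleton] at hb
  simp [Pi.single_eq_of_ne hb, Real.zero_rpow hp0.ne']

theorem PP_single {p : ℝ} (hp0 : 0 < p) (i : ℕ) : PP p (Pi.single i 1) = 1 := by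
  unfold PP
  rw [tsum_eq_single i]
  · simp
  · intro b hb
    simp [Pi.single_eq_of_ne hb, Real.zero_rpow hp0.ne']

/-- coordinate bound -/
theorem coord_le {p K : ℝ} (hp0 : 0 < p) (hK : 0 ≤ K) {f : ℕ → ℝ} (hf : MemLpSeq p f)
    (h : PP p f ≤ K ^ p) (j : ℕ) : |f j| ≤ K := by
  have h1 : |f j| ^ p ≤ K ^ p :=
    (Summable.le_tsum hf j (fun _ _ => Real.rpow_nonneg (abs_nonneg _) _)).trans h
  exact (Real.rpow_le_rpow_iff (abs_nonneg _) hK hp0).1 h1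

theorem rpow_up {p q K a : ℝ} (hp0 : 0 < p) (hpq : p ≤ q) (ha : 0 ≤ a) (haK : a ≤ K) :
    a ^ q ≤ K ^ (q - p) * a ^ p := by
  rcases ha.eq_or_lt with rfl | ha
  · rw [Real.zero_rpow (by linarith), Real.zero_rpow hp0.ne', mul_zero]
  · have : a ^ q = a ^ (q - p) * a ^ p := by rw [← Real.rpow_add ha]; congr 1; ring
    rw [this]
    gcongr

/-- second moment over signs -/
theorem moments (b : ℕ → ℝ) (A : Finset ℕ) :
    (∑ B ∈ A.powerset, (∑ n ∈ A, (if n ∈ B then (1:ℝ) else -1) * b n) ^ 2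
      = 2 ^ A.card * ∑ n ∈ A, b n ^ 2) ∧
    (∑ B ∈ A.powerset, (∑ n ∈ A, (if n ∈ B then (1:ℝ) else -1) * b n) ^ 4
      ≤ 2 ^ A.card * (3 * (∑ n ∈ A, b n ^ 2) ^ 2)) := by
  classical
  induction A using Finset.induction_on with
  | empty => simp
  | insert a A ha ih =>
    obtain ⟨ih2, ih4⟩ := ih
    have key : ∀ F : ℝ → ℝ, ∑ B ∈ (insert a A).powerset,
        F (∑ n ∈ insert a A, (if n ∈ B then (1:ℝ) else -1) * b n)
        = ∑ B ∈ A.powerset, (F (∑ n ∈ A, (if n ∈ B then (1:ℝ) else -1) * b n - b a) +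
           F (∑ n ∈ A, (if n ∈ B then (1:ℝ) else -1) * b n + b a)) := by
      intro F
      rw [Finset.sum_powerset_insert ha, ← Finset.sum_add_distrib]
      refine Finset.sum_congr rfl fun B hB => ?_
      have haB : a ∉ B := fun h => ha (Finset.mem_powerset.1 hB h)
      rw [Finset.sum_insert ha, Finset.sum_insert ha]
      have : ∑ n ∈ A, (if n ∈ insert a B then (1:ℝ) else -1) * b n
          = ∑ n ∈ A, (if n ∈ B then (1:ℝ) else -1) * b n := by
        refine Finset.sum_congr rfl fun n hn => ?_
        have : n ≠ a := fun h => ha (h ▸ hn)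
        simp [Finset.mem_insert, this]
      rw [this]
      simp only [haB, if_false, Finset.mem_insert_self, if_true]
      congr 2 <;> ring
    have k2 := key (fun t => t ^ 2)
    have k4 := key (fun t => t ^ 4)
    set σ := ∑ n ∈ A, b n ^ 2 with hσ
    have hσ0 : 0 ≤ σ := Finset.sum_nonneg fun _ _ => sq_nonneg _
    rw [k2, k4, Finset.card_insert_of_notMem ha, Finset.sum_insert ha, ← hσ]
    constructor
    · have : ∀ u : ℝ, (u - b a) ^ 2 + (u + b a) ^ 2 = 2 * u ^ 2 + 2 * b a ^ 2 := by
        intro u; ring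
      simp_rw [this]
      rw [Finset.sum_add_distrib, ← Finset.mul_sum, ih2, Finset.sum_const, Finset.card_powerset]
      simp only [nsmul_eq_mul]; push_cast; ring
    · have : ∀ u : ℝ, (u - b a) ^ 4 + (u + b a) ^ 4
          = 2 * u ^ 4 + 12 * b a ^ 2 * u ^ 2 + 2 * b a ^ 4 := by
        intro u; ring
      simp_rw [this]
      rw [Finset.sum_add_distrib, Finset.sum_add_distrib, ← Finset.mul_sum, ← Finset.mul_sum,
        ih2, Finset.sum_const, Finset.card_powerset]
      simp only [nsmul_eq_mul]; push_cast
      have h0 : (0:ℝ) ≤ 2 ^ A.card * b a ^ 4 := by positivity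
      rw [pow_succ (2:ℝ) A.card]
      nlinarith

theorem pt_ineq {p : ℝ} (hp0 : 0 < p) (hp1 : p < 1) {u : ℝ} (hu : 0 ≤ u) :
    u ^ 2 - u ^ 4 / 4 ≤ u ^ p := by
  rcases le_total u 1 with h | h
  · have h1 : u ^ 2 ≤ u ^ p := by
      rw [← Real.rpow_natCast]
      rcases hu.eq_or_lt with rfl | h0
      · rw [Real.zero_rpow hp0.ne', Real.zero_rpow (by norm_num)]
      · exact Real.rpow_le_rpow_of_exponent_ge h0 h (by push_cast; linarith)
    have : 0 ≤ u ^ 4 := by positivity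
    linarith
  · have h1 : 1 ≤ u ^ p := Real.one_le_rpow h hp0.le
    nlinarith [sq_nonneg (u ^ 2 - 2)]

/-- Khintchine lower bound -/
theorem khin {p : ℝ} (hp0 : 0 < p) (hp1 : p < 1) (b : ℕ → ℝ) (A : Finset ℕ) :
    2 ^ A.card * (Real.sqrt (∑ n ∈ A, b n ^ 2)) ^ p ≤
    4 * ∑ B ∈ A.powerset, |∑ n ∈ A, (if n ∈ B then (1:ℝ) else -1) * b n| ^ p := by
  obtain ⟨h2, h4⟩ := moments b A
  set σ := ∑ n ∈ A, b n ^ 2 with hσ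
  have hσ0 : 0 ≤ σ := Finset.sum_nonneg fun _ _ => sq_nonneg _
  have hR : 0 ≤ ∑ B ∈ A.powerset, |∑ n ∈ A, (if n ∈ B then (1:ℝ) else -1) * b n| ^ p :=
    Finset.sum_nonneg fun _ _ => Real.rpow_nonneg (abs_nonneg _) _
  rcases hσ0.eq_or_lt with h0 | h0
  · rw [← h0, Real.sqrt_zero, Real.zero_rpow hp0.ne']
    linarith
  set g := Real.sqrt σ with hg
  have hg0 : 0 < g := Real.sqrt_pos.2 h0
  have hgs : g ^ 2 = σ := Real.sq_sqrt hσ0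
  have hgp : 0 < g ^ p := Real.rpow_pos_of_pos hg0 p
  have hpt : ∀ h : ℝ, g ^ p * (h ^ 2 / g ^ 2 - h ^ 4 / (4 * g ^ 4)) ≤ |h| ^ p := by
    intro h
    have := pt_ineq hp0 hp1 (u := |h| / g) (by positivity)
    rw [Real.div_rpow (abs_nonneg _) hg0.le, le_div_iff₀ hgp, div_pow, div_pow, sq_abs,
      (by decide : Even 4).pow_abs] at this
    refine le_trans (le_of_eq ?_) this
    field_simp
  have hs := Finset.sum_le_sum (s := A.powerset) fun B _ =>
    hpt (∑ n ∈ A, (if n ∈ B then (1:ℝ) else -1) * b n)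
  rw [← Finset.mul_sum, Finset.sum_sub_distrib, ← Finset.sum_div, ← Finset.sum_div, h2] at hs
  have h5 : (∑ B ∈ A.powerset, (∑ n ∈ A, (if n ∈ B then (1:ℝ) else -1) * b n) ^ 4) / (4 * g ^ 4)
      ≤ 2 ^ A.card * (3 / 4) := by
    rw [div_le_iff₀ (by positivity)]
    refine h4.trans (le_of_eq ?_)
    rw [← hgs]; ring
  have h6 : 2 ^ A.card * σ / g ^ 2 = 2 ^ A.card := by
    rw [hgs]; field_simp
  rw [h6] at hs
  have h7 : g ^ p * (2 ^ A.card * (1 / 4)) ≤ g ^ p * (2 ^ A.card -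
    (∑ B ∈ A.powerset, (∑ n ∈ A, (if n ∈ B then (1:ℝ) else -1) * b n) ^ 4) / (4 * g ^ 4)) := by
    refine mul_le_mul_of_nonneg_left ?_ hgp.le
    linarith
  linarith

theorem interp {p τ g : ℝ} (hp1 : p < 1) (hp0 : 0 < p) (hτ : 0 < τ) (hg : 0 ≤ g) :
    g ≤ τ ^ (1 - p) * g ^ p + g ^ 2 / τ := by
  have e1 : 0 ≤ τ ^ (1 - p) * g ^ p := by positivity
  have e2 : 0 ≤ g ^ 2 / τ := by positivity
  rcases le_total g τ with h | h
  · have := rpow_up (q := 1) hp0 hp1.le hg h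
    rw [Real.rpow_one] at this
    linarith
  · have : g ≤ g ^ 2 / τ := by rw [le_div_iff₀ hτ]; nlinarith
    linarith

theorem count {p : ℝ} (hp0 : 0 < p) (hp1 : p < 1) (A : Finset ℕ) (y u : ℕ → ℕ → ℝ)
    (hy : ∀ n, MemLpSeq p (y n)) {K w R : ℝ} (hK : 0 < K) (hw : 0 < w)
    (hyK : ∀ n, PP p (y n) ≤ K ^ p)
    (hyu : ∀ n ∈ A, HasSum (fun j => y n j * u n j) 1)
    (hu : ∀ j, ∑ n ∈ A, u n j ^ 2 ≤ w ^ 2)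
    (hR : ∀ B ⊆ A, PP p (fun j => ∑ n ∈ A, (if n ∈ B then (1:ℝ) else -1) * y n j) ≤ R) :
    (A.card : ℝ) ≤ 8 * w * (2 * K ^ 2 * w) ^ (1 - p) * R := by
  set g : ℕ → ℝ := fun j => Real.sqrt (∑ n ∈ A, y n j ^ 2) with hg
  have hg0 : ∀ j, 0 ≤ g j := fun j => Real.sqrt_nonneg _
  have hg2 : ∀ j, g j ^ 2 = ∑ n ∈ A, y n j ^ 2 := fun j =>
    Real.sq_sqrt (Finset.sum_nonneg fun _ _ => sq_nonneg _)
  -- sum of g^p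
  have hkh : ∀ j, g j ^ p ≤ 4 / 2 ^ A.card * ∑ B ∈ A.powerset,
      |∑ n ∈ A, (if n ∈ B then (1:ℝ) else -1) * y n j| ^ p := by
    intro j
    have := khin hp0 hp1 (fun n => y n j) A
    rw [div_mul_eq_mul_div, le_div_iff₀ (by positivity), mul_comm]
    exact this
  have hsB : ∀ B ∈ A.powerset, Summable (fun j =>
      |∑ n ∈ A, (if n ∈ B then (1:ℝ) else -1) * y n j| ^ p) := fun B _ =>
    mem_sum hp0 hp1 hy (fun n => if n ∈ B then (1:ℝ) else -1) A
  have hsS := (summable_sum hsB).mul_left (4 / 2 ^ A.card : ℝ)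
  have hgps : Summable (fun j => g j ^ p) :=
    Summable.of_nonneg_of_le (fun j => Real.rpow_nonneg (hg0 j) _) hkh hsS
  have hgpR : ∑' j, g j ^ p ≤ 4 * R := by
    refine (Summable.tsum_le_tsum hkh hgps hsS).trans ?_
    rw [tsum_mul_left, Summable.tsum_finsetSum hsB]
    have : ∑ B ∈ A.powerset, ∑' j, |∑ n ∈ A, (if n ∈ B then (1:ℝ) else -1) * y n j| ^ p
        ≤ ∑ B ∈ A.powerset, R :=
      Finset.sum_le_sum fun B hB => hR B (Finset.mem_powerset.1 hB)
    rw [Finset.sum_const, Finset.card_powerset, nsmul_eq_mul] at this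
    push_cast at this
    calc _ ≤ 4 / 2 ^ A.card * (2 ^ A.card * R) := by gcongr
      _ = 4 * R := by field_simp
  -- sum of g^2
  have hy2 : ∀ n j, y n j ^ 2 ≤ K ^ (2 - p) * |y n j| ^ p := by
    intro n j
    have := rpow_up (q := 2) hp0 (by linarith) (abs_nonneg _) (coord_le hp0 hK.le (hy n) (hyK n) j)
    rwa [Real.rpow_two, sq_abs] at this
  have hy2s : ∀ n, Summable (fun j => y n j ^ 2) := fun n =>
    Summable.of_nonneg_of_le (fun j => sq_nonneg _) (hy2 n) (Summable.mul_left _ (hy n))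
  have hy2t : ∀ n, ∑' j, y n j ^ 2 ≤ K ^ 2 := by
    intro n
    refine (Summable.tsum_le_tsum (hy2 n) (hy2s n) (Summable.mul_left _ (hy n))).trans ?_
    rw [tsum_mul_left]
    calc _ ≤ K ^ (2 - p) * K ^ p := by gcongr; exact hyK n
      _ = K ^ 2 := by rw [← Real.rpow_add hK, sub_add_cancel, Real.rpow_two]
  have hg2s : Summable (fun j => g j ^ 2) := by
    simp_rw [hg2]; exact summable_sum fun n _ => hy2s n
  have hg2t : ∑' j, g j ^ 2 ≤ A.card * K ^ 2 := by
    simp_rw [hg2]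
    rw [Summable.tsum_finsetSum fun n _ => hy2s n]
    refine (Finset.sum_le_sum fun n _ => hy2t n).trans ?_
    rw [Finset.sum_const, nsmul_eq_mul]
  -- main
  set τ := 2 * K ^ 2 * w with hτ
  have hτ0 : 0 < τ := by positivity
  have hm : HasSum (fun j => ∑ n ∈ A, y n j * u n j) (A.card : ℝ) := by
    have := hasSum_sum hyu
    simpa using this
  have hpt : ∀ j, ∑ n ∈ A, y n j * u n j ≤ w * (τ ^ (1 - p) * g j ^ p + g j ^ 2 / τ) := by
    intro j
    have h1 := Finset.sum_mul_sq_le_sq_mul_sq A (fun n => y n j) (fun n => u n j)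
    rw [← hg2] at h1
    have h2 : (∑ n ∈ A, y n j * u n j) ^ 2 ≤ (w * g j) ^ 2 := by
      refine h1.trans ?_
      rw [mul_pow, mul_comm]
      exact mul_le_mul_of_nonneg_right (hu j) (sq_nonneg _)
    have h3 := abs_le_of_sq_le_sq h2 (mul_nonneg hw.le (hg0 j))
    exact (le_abs_self _).trans <| h3.trans (mul_le_mul_of_nonneg_left (interp hp1 hp0 hτ0 (hg0 j)) hw.le)
  have hrs := ((hgps.hasSum.mul_left (τ ^ (1 - p))).add (hg2s.hasSum.div_const τ)).mul_left w
  have hfin := hasSum_le hpt hm hrs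
  have h8 : τ ^ (1 - p) * ∑' j, g j ^ p ≤ τ ^ (1 - p) * (4 * R) := by gcongr
  have h9 : (∑' j, g j ^ 2) / τ ≤ A.card * K ^ 2 / τ := by gcongr
  have h10 : w * (A.card * K ^ 2 / τ) = A.card / 2 := by rw [hτ]; field_simp
  have h11 : w * (τ ^ (1 - p) * ∑' j, g j ^ p + (∑' j, g j ^ 2) / τ) ≤
     w * (τ ^ (1 - p) * (4 * R) + A.card * K ^ 2 / τ) := by gcongr
  rw [mul_add w (τ ^ (1 - p) * (4 * R)), h10] at h11
  linarith

theorem trunc {p Q δ : ℝ} (hp0 : 0 < p) (hp1 : p < 1) (A : Finset ℕ) (y : ℕ → ℕ → ℝ)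
    (hy : ∀ n, MemLpSeq p (y n)) (hδ0 : 0 < δ) (hδ : 2 * (δ ^ p * Q) ≤ 2 ^ p - 1)
    (hB : ∀ B ⊆ A, PP p (fun j => ∑ n ∈ B, y n j) ≤ Q * PP p (fun j => ∑ n ∈ A, y n j))
    (c : ℕ → ℝ) (hc : ∀ n ∈ A, 0 ≤ c n ∧ c n ≤ δ) :
    PP p (fun j => ∑ n ∈ A, y n j) ≤ 2 * PP p (fun j => ∑ n ∈ A, (1 + c n) * y n j) := by
  classical
  set V := Q * PP p (fun j => ∑ n ∈ A, y n j) with hV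
  set W := ∑ n ∈ A, PP p (y n) with hW
  have h2p : (1:ℝ) < 2 ^ p := Real.one_lt_rpow (by norm_num) hp0
  have key : ∀ k : ℕ, ∀ d : ℕ → ℝ, (∀ n ∈ A, 0 ≤ d n ∧ d n ≤ 1) →
      PP p (fun j => ∑ n ∈ A, d n * y n j) ≤ V / (2 ^ p - 1) + W * ((2 ^ p)⁻¹) ^ k := by
    intro k
    induction k with
    | zero =>
      intro d hd
      have hV0 : 0 ≤ V := (PP_nonneg _ _).trans (hB A subset_rfl)
      have : 0 ≤ V / (2 ^ p - 1) := div_nonneg hV0 (by linarith)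
      have h1 : PP p (fun j => ∑ n ∈ A, d n * y n j) ≤ W := by
        refine (PP_sum hp0 hp1 hy d A).trans (Finset.sum_le_sum fun n hn => ?_)
        have : |d n| ^ p ≤ 1 := Real.rpow_le_one (abs_nonneg _)
          (by rw [abs_of_nonneg (hd n hn).1]; exact (hd n hn).2) hp0.le
        nlinarith [PP_nonneg p (y n)]
      simp only [pow_zero, mul_one]
      linarith
    | succ k ih =>
      intro d hd
      set B := A.filter (fun n => 1 / 2 ≤ d n) with hBdef
      set d' : ℕ → ℝ := fun n => 2 * d n - (if 1 / 2 ≤ d n then 1 else 0) with hd'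
      have h1 := ih d' (by
        intro n hn
        have := hd n hn
        simp only [hd']
        split_ifs with h
        · constructor <;> linarith
        · push Not at h
          constructor <;> linarith)
      have h2 := hB B (Finset.filter_subset _ _)
      have h3 : (fun j => ∑ n ∈ A, d n * y n j) =
          fun j => (2:ℝ)⁻¹ * (∑ n ∈ B, y n j + ∑ n ∈ A, d' n * y n j) := by
        funext j
        rw [hBdef, Finset.sum_filter, ← Finset.sum_add_distrib, Finset.mul_sum]
        refine Finset.sum_congr rfl fun n _ => ?_
        simp only [hd']
        split_ifs <;> ring
      rw [h3, PP_smul]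
      have hmB : MemLpSeq p (fun j => ∑ n ∈ B, y n j) := by
        simpa using mem_sum hp0 hp1 hy (fun _ => 1) B
      have h4 := PP_add hp0 hp1 hmB (mem_sum hp0 hp1 hy d' A)
      have h5 : |(2:ℝ)⁻¹| ^ p = (2 ^ p)⁻¹ := by
        rw [abs_of_pos (by norm_num), Real.inv_rpow (by norm_num)]
      rw [h5, pow_succ]
      have h6 : V / (2 ^ p - 1) = (2 ^ p)⁻¹ * (V + V / (2 ^ p - 1)) := by
        have : (2:ℝ) ^ p - 1 ≠ 0 := by linarith
        field_simp
        ring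
      rw [h6]
      have h7 : (0:ℝ) < (2 ^ p)⁻¹ := by positivity
      have := mul_le_mul_of_nonneg_left (h4.trans (add_le_add h2 h1)) h7.le
      linarith
  have lim : ∀ d : ℕ → ℝ, (∀ n ∈ A, 0 ≤ d n ∧ d n ≤ 1) →
      PP p (fun j => ∑ n ∈ A, d n * y n j) ≤ V / (2 ^ p - 1) := by
    intro d hd
    have ht : Filter.Tendsto (fun k : ℕ => V / (2 ^ p - 1) + W * (((2:ℝ) ^ p)⁻¹) ^ k)
        Filter.atTop (nhds (V / (2 ^ p - 1) + W * 0)) :=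
      ((tendsto_pow_atTop_nhds_zero_of_lt_one (by positivity)
        (inv_lt_one_of_one_lt₀ h2p)).const_mul W).const_add _
    rw [mul_zero, add_zero] at ht
    exact ge_of_tendsto' ht fun k => key k d hd
  have h1 := lim (fun n => c n / δ) (fun n hn =>
    ⟨div_nonneg (hc n hn).1 hδ0.le, (div_le_one hδ0).2 (hc n hn).2⟩)
  have h2 : PP p (fun j => ∑ n ∈ A, c n * y n j) ≤ δ ^ p * (V / (2 ^ p - 1)) := by
    have : (fun j => ∑ n ∈ A, c n * y n j) = fun j => δ * ∑ n ∈ A, c n / δ * y n j := by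
      funext j
      rw [Finset.mul_sum]
      refine Finset.sum_congr rfl fun n _ => ?_
      field_simp
    rw [this, PP_smul, abs_of_pos hδ0]
    gcongr
  have h3 : (fun j => ∑ n ∈ A, y n j) =
      fun j => ∑ n ∈ A, (1 + c n) * y n j - ∑ n ∈ A, c n * y n j := by
    funext j
    rw [← Finset.sum_sub_distrib]
    exact Finset.sum_congr rfl fun n _ => by ring
  have h4 := PP_sub hp0 hp1 (mem_sum hp0 hp1 hy (fun n => 1 + c n) A) (mem_sum hp0 hp1 hy c A)
  rw [← h3] at h4
  have h5 : δ ^ p * (V / (2 ^ p - 1)) ≤ PP p (fun j => ∑ n ∈ A, y n j) / 2 := by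
    have hpos : (0:ℝ) < 2 ^ p - 1 := by linarith
    rw [mul_div_assoc', div_le_iff₀ hpos, hV]
    nlinarith [mul_le_mul_of_nonneg_right hδ (PP_nonneg p (fun j => ∑ n ∈ A, y n j))]
  linarith

theorem xs_lin {p : ℝ} (hp0 : 0 < p) (hp1 : p < 1) {x : ℕ → ℕ → ℝ} {xs : ℕ → (ℕ → ℝ) → ℝ}
    (hb : IsLpBasis p x xs) (m : ℕ) {y : ℕ → ℕ → ℝ} (hy : ∀ n, MemLpSeq p (y n))
    (c : ℕ → ℝ) (A : Finset ℕ) :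
    xs m (fun j => ∑ n ∈ A, c n * y n j) = ∑ n ∈ A, c n * xs m (y n) := by
  classical
  induction A using Finset.induction_on with
  | empty =>
    have := hb.map_smul m 0 _ (mem_zero hp0)
    simpa using this
  | insert a A ha ih =>
    simp_rw [Finset.sum_insert ha]
    rw [← ih, ← hb.map_smul m (c a) _ (hy a)]
    exact hb.map_add m _ _ (mem_smul (c a) (hy a)) (mem_sum hp0 hp1 hy c A)

theorem xs_comb {p : ℝ} (hp0 : 0 < p) (hp1 : p < 1) {x : ℕ → ℕ → ℝ} {xs : ℕ → (ℕ → ℝ) → ℝ}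
    (hb : IsLpBasis p x xs) (m : ℕ) (c : ℕ → ℝ) (A : Finset ℕ) :
    xs m (fun j => ∑ n ∈ A, c n * x n j) = if m ∈ A then c m else 0 := by
  rw [xs_lin hp0 hp1 hb m hb.mem c A]
  simp [hb.biorth]

theorem xs_bdd {p : ℝ} {x : ℕ → ℕ → ℝ} {xs : ℕ → (ℕ → ℝ) → ℝ}
    (hb : IsLpBasis p x xs) : ∃ b > 0, ∀ n f, MemLpSeq p f → |xs n f| ≤ b * pNorm p f := by
  obtain ⟨b, h⟩ := hb.bdd
  refine ⟨max b 1, by positivity, fun n f hf => (h n f hf).trans ?_⟩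
  exact mul_le_mul_of_nonneg_right (le_max_left _ _) (pNorm_nonneg' p f)

theorem xs_hasSum {p : ℝ} (hp0 : 0 < p) (hp1 : p < 1) {x : ℕ → ℕ → ℝ} {xs : ℕ → (ℕ → ℝ) → ℝ}
    (hb : IsLpBasis p x xs) (n : ℕ) {f : ℕ → ℝ} (hf : MemLpSeq p f) :
    HasSum (fun j => f j * xs n (Pi.single j 1)) (xs n f) := by
  classical
  obtain ⟨b, hb0, hbd⟩ := xs_bdd hb
  have hsing := fun j : ℕ => mem_single hp0 j
  have htl : ∀ s : Finset ℕ, MemLpSeq p (fun j => if j ∈ s then 0 else f j) ∧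
      PP p (fun j => if j ∈ s then 0 else f j) = PP p f - ∑ j ∈ s, |f j| ^ p := by
    intro s
    have h1 : HasSum (fun j => if j ∈ s then |f j| ^ p else 0) (∑ j ∈ s, |f j| ^ p) := by
      have := hasSum_sum_of_ne_finset_zero (L := SummationFilter.unconditional ℕ) (f := fun j => if j ∈ s then |f j| ^ p else 0) (s := s)
        (fun b hb => by simp [hb])
      convert this using 1
      exact Finset.sum_congr rfl fun j hj => by simp [hj]
    have h2 := (Summable.hasSum hf).sub h1
    have h3 : (fun j => |f j| ^ p - if j ∈ s then |f j| ^ p else 0) =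
        fun j => |if j ∈ s then 0 else f j| ^ p := by
      funext j
      split_ifs <;> simp [Real.zero_rpow hp0.ne']
    rw [h3] at h2
    exact ⟨h2.summable, h2.tsum_eq⟩
  have hest : ∀ s : Finset ℕ, |xs n f - ∑ j ∈ s, f j * xs n (Pi.single j 1)| ≤
      b * (PP p f - ∑ j ∈ s, |f j| ^ p) ^ (1 / p) := by
    intro s
    have h1 : f = (fun i => ∑ j ∈ s, f j * (Pi.single j 1 : ℕ → ℝ) i) +
        (fun j => if j ∈ s then 0 else f j) := by
      funext i
      simp only [Pi.add_apply, Pi.single_apply, mul_ite, mul_one, mul_zero, Finset.sum_ite_eq]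
      split_ifs <;> simp
    have h2 := hb.map_add n _ _ (mem_sum hp0 hp1 hsing f s) (htl s).1
    rw [← h1, xs_lin hp0 hp1 hb n hsing] at h2
    have h3 := hbd n _ (htl s).1
    have h4 : pNorm p (fun j => if j ∈ s then 0 else f j) =
      (PP p f - ∑ j ∈ s, |f j| ^ p) ^ (1 / p) := by rw [← (htl s).2]; rfl
    rw [h4] at h3
    rw [h2]
    simpa using h3
  have ht : Filter.Tendsto (fun s : Finset ℕ => b * (PP p f - ∑ j ∈ s, |f j| ^ p) ^ (1 / p))
      Filter.atTop (nhds 0) := by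
    have h1 : Filter.Tendsto (fun s : Finset ℕ => PP p f - ∑ j ∈ s, |f j| ^ p)
        Filter.atTop (nhds (PP p f - PP p f)) :=
      Filter.Tendsto.const_sub _ (Summable.hasSum hf)
    rw [sub_self] at h1
    have h2 := (h1.rpow_const (p := 1 / p) (Or.inr (by positivity))).const_mul b
    rwa [Real.zero_rpow (by positivity), mul_zero] at h2
  have h5 := squeeze_zero_norm (f := fun s : Finset ℕ => xs n f - ∑ j ∈ s, f j * xs n (Pi.single j 1))
    (fun s => hest s) ht
  have h6 := (tendsto_const_nhds (x := xs n f)).sub h5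
  simpa [HasSum] using h6

theorem fin_set {p : ℝ} (hp0 : 0 < p) (hp1 : p < 1) {x : ℕ → ℕ → ℝ} {xs : ℕ → (ℕ → ℝ) → ℝ}
    (hb : IsLpBasis p x xs) {f : ℕ → ℝ} (hf : MemLpSeq p f) {t : ℝ} (ht : 0 < t) :
    {n | t < |xs n f|}.Finite := by
  obtain ⟨b, hb0, hbd⟩ := xs_bdd hb
  obtain ⟨A, c, h⟩ := hb.dense f hf (t / b) (by positivity)
  refine A.finite_toSet.subset fun n hn => ?_
  by_contra hnA
  have hg := mem_sum hp0 hp1 hb.mem c A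
  have hm := mem_sub hp0 hp1 hf hg
  have h1 := hb.map_add n _ _ hm hg
  have h2 : ((fun j => f j - ∑ n ∈ A, c n * x n j) + fun j => ∑ n ∈ A, c n * x n j) = f := by
    funext j; simp
  rw [h2, xs_comb hp0 hp1 hb, if_neg (by simpa using hnA), add_zero] at h1
  have h3 := hbd n _ hm
  rw [← h1] at h3
  have h4 : b * pNorm p (fun j => f j - ∑ n ∈ A, c n * x n j) < b * (t / b) := by gcongr
  rw [mul_div_cancel₀ _ hb0.ne'] at h4
  have : t < |xs n f| := hn
  linarith

theorem qg_PP {p : ℝ} (hp0 : 0 < p) {x : ℕ → ℕ → ℝ} {xs : ℕ → (ℕ → ℝ) → ℝ}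
    (hqg : QuasiGreedy p x xs) : ∃ Q ≥ (1:ℝ), ∀ f, MemLpSeq p f → ∀ A : Finset ℕ,
    GreedySet (fun n => xs n f) A →
    PP p (fun j => ∑ n ∈ A, xs n f * x n j) ≤ Q * PP p f := by
  obtain ⟨C, hC, h⟩ := hqg
  refine ⟨C ^ p, Real.one_le_rpow hC hp0.le, fun f hf A hA => ?_⟩
  have := Real.rpow_le_rpow (pNorm_nonneg' _ _) (h f hf A hA) hp0.le
  rwa [Real.mul_rpow (by linarith) (pNorm_nonneg' _ _), pNorm_rpow hp0, pNorm_rpow hp0] at this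

/-- Bound of the signed sums over a layer of the coefficients. -/
theorem layer {p : ℝ} (hp0 : 0 < p) (hp1 : p < 1) {x : ℕ → ℕ → ℝ} {xs : ℕ → (ℕ → ℝ) → ℝ}
    (hb : IsLpBasis p x xs) {Q δ : ℝ} (hQ : 1 ≤ Q)
    (hqg : ∀ f, MemLpSeq p f → ∀ A : Finset ℕ,
      GreedySet (fun n => xs n f) A →
      PP p (fun j => ∑ n ∈ A, xs n f * x n j) ≤ Q * PP p f)
    (hδ0 : 0 < δ) (hδ : 2 * (δ ^ p * Q) ≤ 2 ^ p - 1)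
    {f : ℕ → ℝ} (hf : MemLpSeq p f) {t : ℝ} (ht : 0 < t) (F : Finset ℕ)
    (hF : ∀ n ∈ F, t < |xs n f| ∧ |xs n f| ≤ (1 + δ) * t) (B : Finset ℕ) (hBF : B ⊆ F) :
    PP p (fun j => ∑ n ∈ F, (if n ∈ B then (1:ℝ) else -1) * (SignType.sign (xs n f) * x n j)) ≤
      8 * Q ^ 2 * (t⁻¹ ^ p * PP p f) := by
  classical
  have ht' : 0 < (1 + δ) * t := by positivity
  set G1 := (fin_set hp0 hp1 hb hf ht).toFinset with hG1
  set G2 := (fin_set hp0 hp1 hb hf ht').toFinset with hG2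
  have m1 : ∀ n, n ∈ G1 ↔ t < |xs n f| := fun n => by simp [hG1]
  have m2 : ∀ n, n ∈ G2 ↔ (1 + δ) * t < |xs n f| := fun n => by simp [hG2]
  have g1 : GreedySet (fun n => xs n f) G1 := fun n hn k hk =>
    (not_lt.1 (fun h => hk ((m1 k).2 h))).trans ((m1 n).1 hn).le
  have g2 : GreedySet (fun n => xs n f) G2 := fun n hn k hk =>
    (not_lt.1 (fun h => hk ((m2 k).2 h))).trans ((m2 n).1 hn).le
  have h21 : G2 ⊆ G1 := fun n hn => (m1 n).2 (by
    have := (m2 n).1 hn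
    nlinarith)
  set A := G1 \ G2 with hA
  have mA : ∀ n, n ∈ A ↔ t < |xs n f| ∧ |xs n f| ≤ (1 + δ) * t := fun n => by
    rw [hA, Finset.mem_sdiff, m1, m2, not_lt]
  set y : ℕ → ℕ → ℝ := fun n j => SignType.sign (xs n f) * x n j with hy
  have hym : ∀ n, MemLpSeq p (y n) := fun n => mem_smul _ (hb.mem n)
  have hmB : ∀ B : Finset ℕ, MemLpSeq p (fun j => ∑ n ∈ B, y n j) := fun B => by
    simpa using mem_sum hp0 hp1 hym (fun _ => 1) B
  -- the projection onto the layer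
  have hP : PP p (fun j => ∑ n ∈ A, xs n f * x n j) ≤ 2 * Q * PP p f := by
    have h1 := PP_sub hp0 hp1 (mem_sum hp0 hp1 hb.mem (fun n => xs n f) G1)
      (mem_sum hp0 hp1 hb.mem (fun n => xs n f) G2)
    have h2 : (fun j => ∑ n ∈ A, xs n f * x n j) =
        fun j => ∑ n ∈ G1, xs n f * x n j - ∑ n ∈ G2, xs n f * x n j := by
      funext j
      rw [hA, ← Finset.sum_sdiff h21, add_sub_cancel_right]
    rw [h2]
    have := hqg f hf G1 g1
    have := hqg f hf G2 g2
    linarith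
  have habs : ∀ n ∈ A, |((SignType.sign (xs n f) : SignType) : ℝ)| = 1 := by
    intro n hn
    have : 0 < |xs n f| := ht.trans ((mA n).1 hn).1
    rcases lt_or_gt_of_ne (abs_pos.1 this) with h | h
    · simp [sign_neg h]
    · simp [sign_pos h]
  -- subsets
  have hsub : ∀ B ⊆ A, PP p (fun j => ∑ n ∈ B, y n j) ≤ Q * PP p (fun j => ∑ n ∈ A, y n j) := by
    intro B hB
    have hc := fun n => xs_comb hp0 hp1 hb n (fun n => ((SignType.sign (xs n f) : SignType) : ℝ)) A
    have h1 := hqg _ (hmB A) B (by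
      intro n hn k hk
      simp only [hy, hc]
      rw [if_pos (hB hn), habs n (hB hn)]
      split_ifs with h
      · rw [habs k h]
      · simp)
    refine le_trans (le_of_eq ?_) h1
    congr 1
    funext j
    refine Finset.sum_congr rfl fun n hn => ?_
    simp only [hy, hc]
    rw [if_pos (hB hn)]
  have htr := trunc hp0 hp1 A y hym hδ0 hδ hsub (fun n => |xs n f| / t - 1) (by
    intro n hn
    obtain ⟨h1, h2⟩ := (mA n).1 hn
    constructor
    · rw [sub_nonneg, le_div_iff₀ ht]; linarith
    · rw [sub_le_iff_le_add, div_le_iff₀ ht]; linarith)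
  have he : (fun j => ∑ n ∈ A, (1 + (|xs n f| / t - 1)) * y n j) =
      fun j => t⁻¹ * ∑ n ∈ A, xs n f * x n j := by
    funext j
    rw [Finset.mul_sum]
    refine Finset.sum_congr rfl fun n _ => ?_
    have : |xs n f| * ((SignType.sign (xs n f) : SignType) : ℝ) = xs n f := abs_mul_sign _
    simp only [hy]
    calc _ = t⁻¹ * ((|xs n f| * ((SignType.sign (xs n f) : SignType) : ℝ)) * x n j) := by ring
      _ = _ := by rw [this]
  rw [he, PP_smul, abs_of_pos (inv_pos.2 ht)] at htr
  have htp : 0 ≤ t⁻¹ ^ p := by positivity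
  have hFA : F ⊆ A := fun n hn => (mA n).2 (hF n hn)
  have h1 := hsub B (hBF.trans hFA)
  have h2 := hsub (F \ B) (Finset.sdiff_subset.trans hFA)
  have h3 : (fun j => ∑ n ∈ F, (if n ∈ B then (1:ℝ) else -1) * (SignType.sign (xs n f) * x n j)) =
      fun j => ∑ n ∈ B, y n j - ∑ n ∈ F \ B, y n j := by
    funext j
    rw [← Finset.sum_sdiff hBF, add_comm, sub_eq_add_neg, ← Finset.sum_neg_distrib]
    congr 1
    · exact Finset.sum_congr rfl fun n hn => by simp [hn, hy]
    · exact Finset.sum_congr rfl fun n hn => by simp [(Finset.mem_sdiff.1 hn).2, hy]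
  rw [h3]
  have h4 := PP_sub hp0 hp1 (hmB B) (hmB (F \ B))
  have h5 : PP p (fun j => ∑ n ∈ A, y n j) ≤ 4 * Q * (t⁻¹ ^ p * PP p f) := by
    have := mul_le_mul_of_nonneg_left hP htp
    linarith
  have h6 := mul_le_mul_of_nonneg_left h5 (by linarith : 0 ≤ Q)
  calc _ ≤ _ := h4
    _ ≤ 2 * (Q * PP p (fun j => ∑ n ∈ A, y n j)) := by linarith
    _ ≤ 2 * (Q * (4 * Q * (t⁻¹ ^ p * PP p f))) := by linarith
    _ = _ := by ring

theorem step {p : ℝ} (hp0 : 0 < p) (hp1 : p < 1) {x : ℕ → ℕ → ℝ} {xs : ℕ → (ℕ → ℝ) → ℝ}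
    (hb : IsLpBasis p x xs) {Q δ b K : ℝ} (hQ : 1 ≤ Q)
    (hqg : ∀ f, MemLpSeq p f → ∀ A : Finset ℕ,
      GreedySet (fun n => xs n f) A →
      PP p (fun j => ∑ n ∈ A, xs n f * x n j) ≤ Q * PP p f)
    (hδ0 : 0 < δ) (hδ : 2 * (δ ^ p * Q) ≤ 2 ^ p - 1) (hb0 : 0 < b)
    (hxb : ∀ n j, |xs n (Pi.single j 1)| ≤ b) (hK : 0 < K) (hxK : ∀ n, PP p (x n) ≤ K ^ p)
    (F : Finset ℕ) {w : ℝ} (hw : 0 < w)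
    (hD : ∀ j, b * ∑ n ∈ F, |xs n (Pi.single j 1)| ≤ w ^ 2) (i : ℕ) :
    ∑ n ∈ F, |xs n (Pi.single i 1)| ≤
      (64 * Q ^ 2 * (1 + δ) * b ^ (1 - p) * (1 - ((1 + δ)⁻¹) ^ (1 - p))⁻¹) *
        (w * (2 * K ^ 2 * w) ^ (1 - p)) := by
  classical
  set f : ℕ → ℝ := Pi.single i 1 with hf
  have hfm : MemLpSeq p f := mem_single hp0 i
  set r : ℝ := (1 + δ)⁻¹ with hr
  have hr0 : 0 < r := by positivity
  have hr1 : r < 1 := inv_lt_one_of_one_lt₀ (by linarith)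
  set ρ : ℝ := r ^ (1 - p) with hρ
  have hρ0 : 0 < ρ := Real.rpow_pos_of_pos hr0 _
  have hρ1 : ρ < 1 := Real.rpow_lt_one hr0.le hr1 (by linarith)
  have hex : ∀ n, ∃ k : ℕ, xs n f ≠ 0 → r ^ (k + 1) < |xs n f| / b ∧ |xs n f| / b ≤ r ^ k := by
    intro n
    by_cases h : xs n f = 0
    · exact ⟨0, fun h' => absurd h h'⟩
    · obtain ⟨k, hk⟩ := exists_nat_pow_near_of_lt_one (x := |xs n f| / b) (y := r)
        (div_pos (abs_pos.2 h) hb0) ((div_le_one hb0).2 (hxb n i)) hr0 hr1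
      exact ⟨k, fun _ => hk⟩
  choose κ hκ using hex
  set F0 := F.filter (fun n => xs n f ≠ 0) with hF0
  have hsum0 : ∑ n ∈ F, |xs n f| = ∑ n ∈ F0, |xs n f| := by
    rw [hF0, Finset.sum_filter]
    refine Finset.sum_congr rfl fun n _ => ?_
    split_ifs with h
    · rfl
    · push Not at h
      simp [h]
  set Z := w * (2 * K ^ 2 * w) ^ (1 - p) with hZ
  have hZ0 : 0 ≤ Z := by positivity
  have hlay : ∀ k : ℕ, ∑ n ∈ F0 with κ n = k, |xs n f| ≤
      64 * Q ^ 2 * (1 + δ) * b ^ (1 - p) * Z * ρ ^ k := by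
    intro k
    set E := F0.filter (fun n => κ n = k) with hE
    set t := b * r ^ (k + 1) with ht
    have ht0 : 0 < t := by positivity
    have hEF : E ⊆ F := (Finset.filter_subset _ _).trans (Finset.filter_subset _ _)
    have hEne : ∀ n ∈ E, xs n f ≠ 0 := fun n hn =>
      (Finset.mem_filter.1 (Finset.mem_filter.1 hn).1).2
    have hEt : ∀ n ∈ E, t < |xs n f| ∧ |xs n f| ≤ (1 + δ) * t := by
      intro n hn
      obtain ⟨h1, h2⟩ := hκ n (hEne n hn)
      rw [(Finset.mem_filter.1 hn).2] at h1 h2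
      rw [lt_div_iff₀ hb0] at h1
      rw [div_le_iff₀ hb0] at h2
      have : (1 + δ) * t = r ^ k * b := by
        rw [ht, pow_succ, hr]; field_simp
      exact ⟨by rw [ht]; linarith, by rw [this]; exact h2⟩
    have hsq : ∀ n ∈ E, ((SignType.sign (xs n f) : SignType) : ℝ) *
        ((SignType.sign (xs n f) : SignType) : ℝ) = 1 := by
      intro n hn
      rcases lt_or_gt_of_ne (hEne n hn) with h | h
      · simp [sign_neg h]
      · simp [sign_pos h]
    have hs1 : ∀ n, |((SignType.sign (xs n f) : SignType) : ℝ)| ≤ 1 := by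
      intro n
      rcases lt_trichotomy (xs n f) 0 with h | h | h
      · simp [sign_neg h]
      · simp [h]
      · simp [sign_pos h]
    have hcount := count hp0 hp1 E (fun n j => SignType.sign (xs n f) * x n j)
      (fun n j => SignType.sign (xs n f) * xs n (Pi.single j 1))
      (fun n => mem_smul _ (hb.mem n)) hK hw
      (fun n => by
        rw [PP_smul]
        have : |((SignType.sign (xs n f) : SignType) : ℝ)| ^ p ≤ 1 :=
          Real.rpow_le_one (abs_nonneg _) (hs1 n) hp0.le
        have h0 := PP_nonneg p (x n)
        have := hxK n
        nlinarith)
      (fun n hn => by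
        have h1 := xs_hasSum hp0 hp1 hb n (hb.mem n)
        rw [hb.biorth, if_pos rfl] at h1
        convert h1 using 2 with j
        calc _ = (((SignType.sign (xs n f) : SignType) : ℝ) *
            ((SignType.sign (xs n f) : SignType) : ℝ)) * (x n j * xs n (Pi.single j 1)) := by ring
          _ = _ := by rw [hsq n hn, one_mul])
      (fun j => by
        refine le_trans ?_ (hD j)
        rw [Finset.mul_sum]
        refine le_trans (Finset.sum_le_sum fun n hn => ?_)
          (Finset.sum_le_sum_of_subset_of_nonneg hEF fun n _ _ => by positivity)
        rw [mul_pow, pow_two, hsq n hn, one_mul, ← sq_abs, pow_two]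
        exact mul_le_mul_of_nonneg_right (hxb n j) (abs_nonneg _))
      (fun B hB => layer hp0 hp1 hb hQ hqg hδ0 hδ hfm ht0 E hEt B hB)
    have hPf : PP p f = 1 := PP_single hp0 i
    rw [hPf, mul_one] at hcount
    have h1 : ∑ n ∈ E, |xs n f| ≤ E.card * ((1 + δ) * t) := by
      refine (Finset.sum_le_sum fun n hn => (hEt n hn).2).trans ?_
      rw [Finset.sum_const, nsmul_eq_mul]
    have h2 : t⁻¹ ^ p * t = t ^ (1 - p) := by
      rw [Real.rpow_sub ht0, Real.rpow_one, Real.inv_rpow ht0.le]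
      field_simp
    have h3 : t ^ (1 - p) ≤ b ^ (1 - p) * ρ ^ k := by
      rw [ht, Real.mul_rpow hb0.le (by positivity), hρ]
      have : (r ^ (k + 1)) ^ (1 - p) = (r ^ (1 - p)) ^ (k + 1) := by
        rw [← Real.rpow_natCast, ← Real.rpow_natCast, ← Real.rpow_mul hr0.le,
          ← Real.rpow_mul hr0.le, mul_comm]
      rw [this]
      refine mul_le_mul_of_nonneg_left ?_ (by positivity)
      exact pow_le_pow_of_le_one hρ0.le hρ1.le (Nat.le_succ k)
    calc _ ≤ _ := h1
      _ ≤ (8 * w * (2 * K ^ 2 * w) ^ (1 - p) * (8 * Q ^ 2 * t⁻¹ ^ p)) * ((1 + δ) * t) := by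
        gcongr
      _ = 64 * Q ^ 2 * (1 + δ) * Z * (t⁻¹ ^ p * t) := by rw [hZ]; ring
      _ = 64 * Q ^ 2 * (1 + δ) * Z * t ^ (1 - p) := by rw [h2]
      _ ≤ 64 * Q ^ 2 * (1 + δ) * Z * (b ^ (1 - p) * ρ ^ k) := by gcongr
      _ = _ := by ring
  have hmaps : ∀ n ∈ F0, κ n ∈ Finset.range (F0.sup κ + 1) := fun n hn =>
    Finset.mem_range.2 (Nat.lt_succ_of_le (Finset.le_sup hn))
  rw [hsum0, ← Finset.sum_fiberwise_of_maps_to hmaps]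
  refine (Finset.sum_le_sum fun k _ => hlay k).trans ?_
  rw [← Finset.mul_sum]
  have hgeo : ∑ k ∈ Finset.range (F0.sup κ + 1), ρ ^ k ≤ (1 - ρ)⁻¹ := by
    rw [← tsum_geometric_of_lt_one hρ0.le hρ1]
    exact (summable_geometric_of_lt_one hρ0.le hρ1).sum_le_tsum _ fun _ _ => by positivity
  calc _ ≤ 64 * Q ^ 2 * (1 + δ) * b ^ (1 - p) * Z * (1 - ρ)⁻¹ := by gcongr
    _ = _ := by ring

theorem main_bound {p : ℝ} (hp0 : 0 < p) (hp1 : p < 1) {x : ℕ → ℕ → ℝ} {xs : ℕ → (ℕ → ℝ) → ℝ}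
    (hb : IsLpBasis p x xs) (hqg : QuasiGreedy p x xs) :
    ∃ D : ℝ, 0 ≤ D ∧ ∀ (F : Finset ℕ) (j : ℕ), ∑ n ∈ F, |xs n (Pi.single j 1)| ≤ D := by
  obtain ⟨Q, hQ, hq⟩ := qg_PP hp0 hqg
  obtain ⟨b, hb0, hbd⟩ := xs_bdd hb
  obtain ⟨C, hC⟩ := hb.norm_ub
  set K := max C 1 with hKdef
  have hK : 0 < K := by positivity
  have hxK : ∀ n, PP p (x n) ≤ K ^ p := fun n => by
    rw [← pNorm_rpow hp0]
    exact Real.rpow_le_rpow (pNorm_nonneg' _ _) ((hC n).trans (le_max_left _ _)) hp0.le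
  have hxb : ∀ n j, |xs n (Pi.single j 1)| ≤ b := fun n j => by
    have := hbd n _ (mem_single hp0 j)
    have h1 : pNorm p (Pi.single j 1) = 1 := by
      change (PP p (Pi.single j 1)) ^ (1 / p) = 1
      rw [PP_single hp0, Real.one_rpow]
    rwa [h1, mul_one] at this
  have h2p : (1:ℝ) < 2 ^ p := Real.one_lt_rpow (by norm_num) hp0
  set δ : ℝ := ((2 ^ p - 1) / (2 * Q)) ^ (1 / p) with hδdef
  have hpos : (0:ℝ) < (2 ^ p - 1) / (2 * Q) := div_pos (by linarith) (by linarith)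
  have hδ0 : 0 < δ := Real.rpow_pos_of_pos hpos _
  have hδ : 2 * (δ ^ p * Q) ≤ 2 ^ p - 1 := by
    rw [hδdef, ← Real.rpow_mul hpos.le, one_div_mul_cancel hp0.ne', Real.rpow_one]
    apply le_of_eq
    field_simp
  set K1 := (64 * Q ^ 2 * (1 + δ) * b ^ (1 - p) * (1 - ((1 + δ)⁻¹) ^ (1 - p))⁻¹) with hK1
  have hr1 : ((1 + δ)⁻¹) ^ (1 - p) < 1 :=
    Real.rpow_lt_one (by positivity) (inv_lt_one_of_one_lt₀ (by linarith)) (by linarith)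
  have hK10 : 0 ≤ K1 := by
    have : 0 ≤ (1 - ((1 + δ)⁻¹) ^ (1 - p))⁻¹ := inv_nonneg.2 (by linarith)
    positivity
  set K3 := b * K1 * (2 * K ^ 2) ^ (1 - p) with hK3
  have hK30 : 0 ≤ K3 := by positivity
  refine ⟨(K3 ^ (1 / p)) ^ 2 / b, by positivity, fun F => ?_⟩
  have hbb : BddAbove (Set.range fun j => ∑ n ∈ F, |xs n (Pi.single j 1)|) := by
    refine ⟨∑ n ∈ F, b, ?_⟩
    rintro _ ⟨j, rfl⟩
    exact Finset.sum_le_sum fun n _ => hxb n j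
  set S := ⨆ j, ∑ n ∈ F, |xs n (Pi.single j 1)| with hS
  have hle : ∀ j, ∑ n ∈ F, |xs n (Pi.single j 1)| ≤ S := fun j => le_ciSup hbb j
  suffices h : S ≤ (K3 ^ (1 / p)) ^ 2 / b from fun j => (hle j).trans h
  rcases le_or_gt S 0 with hS0 | hS0
  · exact hS0.trans (by positivity)
  set w := Real.sqrt (b * S) with hw
  have hw0 : 0 < w := Real.sqrt_pos.2 (by positivity)
  have hw2 : w ^ 2 = b * S := Real.sq_sqrt (by positivity)
  have h1 : S ≤ K1 * (w * (2 * K ^ 2 * w) ^ (1 - p)) :=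
    ciSup_le fun i => step hp0 hp1 hb hQ hq hδ0 hδ hb0 hxb hK hxK F hw0
      (fun j => by rw [hw2]; exact mul_le_mul_of_nonneg_left (hle j) hb0.le) i
  have h2 : w * w ≤ w * (K3 * w ^ (1 - p)) := by
    calc w * w = b * S := by rw [← hw2]; ring
      _ ≤ b * (K1 * (w * (2 * K ^ 2 * w) ^ (1 - p))) := by gcongr
      _ = _ := by rw [Real.mul_rpow (by positivity) hw0.le, hK3]; ring
  have h3 : w ≤ K3 * w ^ (1 - p) := le_of_mul_le_mul_left h2 hw0
  have h4 : w ^ p ≤ K3 := by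
    have hwp : 0 < w ^ (1 - p) := Real.rpow_pos_of_pos hw0 _
    have : w ^ p * w ^ (1 - p) = w := by
      rw [← Real.rpow_add hw0, add_sub_cancel, Real.rpow_one]
    exact le_of_mul_le_mul_right (by rw [this]; exact h3) hwp
  have h5 : w ≤ K3 ^ (1 / p) := by
    have := Real.rpow_le_rpow (by positivity) h4 (by positivity : 0 ≤ 1 / p)
    rwa [← Real.rpow_mul hw0.le, mul_one_div_cancel hp0.ne', Real.rpow_one] at this
  rw [le_div_iff₀ hb0, mul_comm, ← hw2]
  gcongr

theorem sum_xs_le {p : ℝ} (hp0 : 0 < p) (hp1 : p < 1) {x : ℕ → ℕ → ℝ} {xs : ℕ → (ℕ → ℝ) → ℝ}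
    (hb : IsLpBasis p x xs) {D : ℝ} (hD0 : 0 ≤ D)
    (hD : ∀ (F : Finset ℕ) (j : ℕ), ∑ n ∈ F, |xs n (Pi.single j 1)| ≤ D)
    {f : ℕ → ℝ} (hf : MemLpSeq p f) (hf1 : pNorm p f ≤ 1) (F : Finset ℕ) :
    ∑ n ∈ F, |xs n f| ≤ D := by
  have hP : PP p f ≤ 1 := by
    rw [← pNorm_rpow hp0]
    exact Real.rpow_le_one (pNorm_nonneg' _ _) hf1 hp0.le
  have hfj : ∀ j, |f j| ≤ |f j| ^ p := by
    intro j
    have h1 := coord_le (K := 1) hp0 zero_le_one hf (by rwa [Real.one_rpow]) j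
    have := rpow_up (q := 1) hp0 hp1.le (abs_nonneg _) h1
    simpa using this
  have hsn : ∀ n, HasSum (fun j => SignType.sign (xs n f) * (f j * xs n (Pi.single j 1)))
      |xs n f| := by
    intro n
    have := (xs_hasSum hp0 hp1 hb n hf).mul_left ((SignType.sign (xs n f) : SignType) : ℝ)
    rwa [sign_mul_self] at this
  have h1 := hasSum_sum (s := F) fun n _ => hsn n
  have h2 : HasSum (fun j => D * |f j| ^ p) (D * PP p f) := (Summable.hasSum hf).mul_left D
  refine (hasSum_le (fun j => ?_) h1 h2).trans (by nlinarith)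
  calc _ ≤ ∑ n ∈ F, |f j| * |xs n (Pi.single j 1)| := by
        refine Finset.sum_le_sum fun n _ => ?_
        rw [← abs_mul]
        refine (le_abs_self _).trans ?_
        rw [abs_mul]
        refine mul_le_of_le_one_left (abs_nonneg _) ?_
        rcases lt_trichotomy (xs n f) 0 with h | h | h
        · simp [sign_neg h]
        · simp [h]
        · simp [sign_pos h]
    _ = |f j| * ∑ n ∈ F, |xs n (Pi.single j 1)| := by rw [Finset.mul_sum]
    _ ≤ |f j| ^ p * D := by
        gcongr
        · exact hfj j
        · exact hD F j
    _ = _ := mul_comm _ _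

/-- For a quasi-greedy basis of `ℓ_p`, `0<p<1`, the dual basis `(x_n^*)` is
equivalent to the unit vector system of `c₀`: for every finitely supported
scalar sequence `a`, the dual-space norm of `∑ a_n x_n^*` is comparable to
`max_n |a_n|`. -/
theorem stmt7 (p : ℝ) (hp0 : 0 < p) (hp1 : p < 1)
    (x : ℕ → ℕ → ℝ) (xs : ℕ → (ℕ → ℝ) → ℝ)
    (hbasis : IsLpBasis p x xs) (hqg : QuasiGreedy p x xs) :
    ∃ c C : ℝ, 0 < c ∧ c ≤ C ∧
      ∀ (s : Finset ℕ) (a : ℕ → ℝ), (∀ n ∉ s, a n = 0) →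
        c * (⨆ n, |a n|) ≤
          sSup {r : ℝ | ∃ f : ℕ → ℝ, MemLpSeq p f ∧ pNorm p f ≤ 1 ∧
            r = |∑ n ∈ s, a n * xs n f|} ∧
        sSup {r : ℝ | ∃ f : ℕ → ℝ, MemLpSeq p f ∧ pNorm p f ≤ 1 ∧
            r = |∑ n ∈ s, a n * xs n f|} ≤ C * (⨆ n, |a n|) := by
  obtain ⟨D, hD0, hD⟩ := main_bound hp0 hp1 hbasis hqg
  obtain ⟨K, hK⟩ := hbasis.norm_ub
  obtain ⟨c0, hc0, hlb⟩ := hbasis.norm_lb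
  have hK0 : 0 < K := hc0.trans_le ((hlb 0).trans (hK 0))
  refine ⟨K⁻¹, max D K⁻¹, inv_pos.2 hK0, le_max_right _ _, fun s a ha => ?_⟩
  have hbdd : BddAbove (Set.range fun n => |a n|) := by
    refine ⟨∑ n ∈ s, |a n|, ?_⟩
    rintro _ ⟨n, rfl⟩
    by_cases h : n ∈ s
    · exact Finset.single_le_sum (f := fun n => |a n|) (fun _ _ => abs_nonneg _) h
    · simp only [ha n h, abs_zero]
      exact Finset.sum_nonneg fun _ _ => abs_nonneg _
  have hM0 : 0 ≤ ⨆ n, |a n| := Real.iSup_nonneg fun _ => abs_nonneg _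
  have hup : ∀ r ∈ {r : ℝ | ∃ f : ℕ → ℝ, MemLpSeq p f ∧ pNorm p f ≤ 1 ∧
            r = |∑ n ∈ s, a n * xs n f|}, r ≤ max D K⁻¹ * (⨆ n, |a n|) := by
    rintro r ⟨f, hf, hf1, rfl⟩
    calc |∑ n ∈ s, a n * xs n f| ≤ ∑ n ∈ s, |a n * xs n f| := Finset.abs_sum_le_sum_abs _ _
      _ ≤ ∑ n ∈ s, (⨆ n, |a n|) * |xs n f| := by
        refine Finset.sum_le_sum fun n _ => ?_
        rw [abs_mul]
        exact mul_le_mul_of_nonneg_right (le_ciSup hbdd n) (abs_nonneg _)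
      _ = (⨆ n, |a n|) * ∑ n ∈ s, |xs n f| := by rw [Finset.mul_sum]
      _ ≤ (⨆ n, |a n|) * max D K⁻¹ := by
        gcongr
        exact (sum_xs_le hp0 hp1 hbasis hD0 hD hf hf1 s).trans (le_max_left _ _)
      _ = _ := mul_comm _ _
  have hnn : 0 ≤ sSup {r : ℝ | ∃ f : ℕ → ℝ, MemLpSeq p f ∧ pNorm p f ≤ 1 ∧
            r = |∑ n ∈ s, a n * xs n f|} := by
    refine Real.sSup_nonneg ?_
    rintro r ⟨f, _, _, rfl⟩
    exact abs_nonneg _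
  refine ⟨?_, Real.sSup_le hup (mul_nonneg (hD0.trans (le_max_left _ _)) hM0)⟩
  rw [inv_mul_le_iff₀ hK0]
  refine Real.iSup_le (fun n => ?_) (mul_nonneg hK0.le hnn)
  by_cases h : n ∈ s
  · rw [← inv_mul_le_iff₀ hK0]
    refine le_csSup ⟨_, hup⟩ ⟨fun j => K⁻¹ * x n j, mem_smul _ (hbasis.mem n), ?_, ?_⟩
    · have h1 : pNorm p (fun j => K⁻¹ * x n j) = K⁻¹ * pNorm p (x n) := by
        change (PP p _) ^ (1 / p) = K⁻¹ * (PP p _) ^ (1 / p)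
        rw [PP_smul, Real.mul_rpow (by positivity) (PP_nonneg _ _), ← Real.rpow_mul (abs_nonneg _),
          mul_one_div_cancel hp0.ne', Real.rpow_one, abs_of_pos (inv_pos.2 hK0)]
      rw [h1, inv_mul_le_iff₀ hK0, mul_one]
      exact hK n
    · have h2 : ∀ m, xs m (fun j => K⁻¹ * x n j) = if m = n then K⁻¹ else 0 := fun m => by
        rw [hbasis.map_smul m _ _ (hbasis.mem n), hbasis.biorth]
        simp
      simp only [h2, mul_ite, mul_zero, Finset.sum_ite_eq', h, if_true]
      rw [abs_mul, abs_of_pos (inv_pos.2 hK0), mul_comm]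
  · rw [ha n h, abs_zero]
    exact mul_nonneg hK0.le hnn
end

section
/- Let 0<p≤1 and consider the difference basis of ℓ_p: d_1 = e_1 and d_n = e_n − e_{n−1} for n ≥ 2, with biorthogonal functionals d_n*(f) = Σ_{j≥n} f(j) (the sum converges absolutely since ℓ_p ⊆ ℓ_1). Then for every m ≥ 1 the m-th conditionality constant satisfies k_m ≥ (2m)^{1/p}; more precisely, for every m there exist f ∈ ℓ_p with f ≠ 0 and a set A ⊆ ℕ with |A| ≤ m such that ‖S_A f‖_p ≥ (2m)^{1/p}·‖f‖_p, where S_A f := Σ_{n∈A} d_n*(f)·d_n. -/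
open scoped BigOperators

/-- The difference basis of `ℓ_p`: `d 0 = e 0` and `d n = e n - e (n-1)` for `n ≥ 1`
(indices starting at `0`). -/
noncomputable def diffBasis (n : ℕ) : ℕ → ℝ :=
  fun j => (if j = n then (1 : ℝ) else 0) - (if n ≠ 0 ∧ j = n - 1 then (1 : ℝ) else 0)

/-- The biorthogonal functionals of the difference basis: the tail sums
`d_n^*(f) = ∑_{j ≥ n} f j` (absolutely convergent since `ℓ_p ⊆ ℓ_1`). -/
noncomputable def diffCoef (n : ℕ) (f : ℕ → ℝ) : ℝ := ∑' k, f (n + k)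


theorem aux_coef (N n : ℕ) (h : n ≤ N) :
    diffCoef n (fun j => if j = N then (1:ℝ) else 0) = 1 := by
  unfold diffCoef
  rw [tsum_eq_single (N - n)]
  · beta_reduce
    rw [if_pos (by omega)]
  · intro b hb
    beta_reduce
    rw [if_neg (by omega)]

theorem aux_sum (k j : ℕ) :
    ∑ i ∈ Finset.range k, diffBasis (2 * i + 1) j
      = if j < 2 * k then (if j % 2 = 0 then (-1:ℝ) else 1) else 0 := by
  induction k with
  | zero => simp
  | succ k ih =>
    rw [Finset.sum_range_succ, ih]
    unfold diffBasis
    rcases lt_or_ge j (2 * k) with h | h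
    · rw [if_pos h, if_pos (by omega : j < 2 * (k + 1)), if_neg (by omega : ¬ j = 2 * k + 1),
        if_neg (by omega : ¬ (2 * k + 1 ≠ 0 ∧ j = 2 * k + 1 - 1))]
      ring
    · rw [if_neg (by omega : ¬ j < 2 * k)]
      by_cases h1 : j = 2 * k
      · subst h1
        simp
      · by_cases h2 : j = 2 * k + 1
        · subst h2
          rw [if_pos rfl, if_neg (by omega), if_pos (by omega), if_neg (by omega)]
          ring
        · rw [if_neg h2, if_neg (by omega), if_neg (by omega)]
          ring

/-- The difference basis of `ℓ_p`, `0<p≤1`, has `m`-th conditionality constant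
at least `(2m)^(1/p)`: for every `m ≥ 1` there are `f ≠ 0` and `A` with
`|A| ≤ m` such that `‖S_A f‖_p ≥ (2m)^(1/p)·‖f‖_p`. -/
theorem stmt9 (p : ℝ) (hp0 : 0 < p) (hp1 : p ≤ 1) (m : ℕ) (hm : 1 ≤ m) :
    ∃ (f : ℕ → ℝ) (A : Finset ℕ), MemLpSeq p f ∧ f ≠ 0 ∧ A.card ≤ m ∧
      (2 * (m : ℝ)) ^ (1 / p) * pNorm p f
        ≤ pNorm p (fun j => ∑ n ∈ A, diffCoef n f * diffBasis n j) := by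
  have hz : (0:ℝ) ^ p = 0 := Real.zero_rpow hp0.ne'
  refine ⟨fun j => if j = 2 * m then (1:ℝ) else 0,
    (Finset.range m).image (fun i => 2 * i + 1), ?_, ?_, ?_, ?_⟩
  · refine summable_of_ne_finset_zero (s := {2 * m}) ?_
    intro b hb
    have : b ≠ 2 * m := by simpa using hb
    simp [this, hz]
  · intro h
    have := congrFun h (2 * m)
    simp at this
  · exact Finset.card_image_le.trans (by simp)
  · have h1 : pNorm p (fun j => if j = 2 * m then (1:ℝ) else 0) = 1 := by
      unfold pNorm
      rw [tsum_eq_single (2 * m)]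
      · simp
      · intro b hb
        simp [hb, hz]
    have h2 : (fun j => ∑ n ∈ (Finset.range m).image (fun i => 2 * i + 1),
        diffCoef n (fun j => if j = 2 * m then (1:ℝ) else 0) * diffBasis n j)
        = fun j => if j < 2 * m then (if j % 2 = 0 then (-1:ℝ) else 1) else 0 := by
      funext j
      rw [Finset.sum_image (by intro a _ b _ h; simpa using h), ← aux_sum]
      refine Finset.sum_congr rfl fun i hi => ?_
      have := Finset.mem_range.1 hi
      rw [aux_coef _ _ (by omega), one_mul]
    rw [h1, h2, mul_one]
    unfold pNorm
    rw [tsum_eq_sum (s := Finset.range (2 * m))]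
    · rw [Finset.sum_congr rfl (g := fun _ => (1:ℝ))]
      · simp
      · intro j hj
        beta_reduce
        rw [if_pos (Finset.mem_range.1 hj)]
        split_ifs <;> simp
    · intro b hb
      beta_reduce
      rw [if_neg (fun h => hb (Finset.mem_range.2 h))]
      simp [hz]
end

section
/- Let X be a GT space and let (x_n)_{n∈ℕ} together with (x_n*)_{n∈ℕ} be a basis of X with the bounded restricted truncation operator property. Let (s_m)_{m≥1} be a sequence of positive numbers such that s_m ≤ K·φ_l(m) for all m and some constant K. Then there is a constant C such that for every m ≥ 1, m·( Σ_{n=1}^m s_n^{−2} )^{−1/2} ≤ C·φ_l(m). -/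
open scoped BigOperators ENNReal

/-- `X` is a GT space: every bounded operator into `ℓ_2` is absolutely summing,
with the absolutely summing norm controlled by `D·‖T‖`. -/
def IsGTSpace (X : Type*) [NormedAddCommGroup X] [NormedSpace ℝ X] : Prop :=
  ∃ D : ℝ, ∀ T : X →L[ℝ] lp (fun _ : ℕ => ℝ) 2, ∀ (B : Finset ℕ) (f : ℕ → X),
    ∃ ε : ℕ → ℝ, (∀ k, ε k = 1 ∨ ε k = -1) ∧
      ∑ k ∈ B, ‖T (f k)‖ ≤ D * ‖T‖ * ‖∑ k ∈ B, ε k • f k‖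

/-- `(x_n)` together with bounded linear functionals `(x_n^*)` is a
(semi-normalized, fundamental, M-bounded Markushevich) basis of `X`. -/
structure IsXBasis {X : Type*} [NormedAddCommGroup X] [NormedSpace ℝ X]
    (x : ℕ → X) (xs : ℕ → X →L[ℝ] ℝ) : Prop where
  biorth : ∀ m n, xs m (x n) = if m = n then (1 : ℝ) else 0
  dense : ∀ f : X, ∀ ε > 0, ∃ (A : Finset ℕ) (c : ℕ → ℝ), ‖f - ∑ n ∈ A, c n • x n‖ < ε
  norm_lb : ∃ c > 0, ∀ n, c ≤ ‖x n‖
  norm_ub : ∃ C : ℝ, ∀ n, ‖x n‖ ≤ C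
  dual_ub : ∃ b : ℝ, ∀ n, ‖xs n‖ ≤ b

/-- The sign function, with the convention `sgn 0 = 1`. -/
noncomputable def sgn (a : ℝ) : ℝ := if a = 0 then 1 else a / |a|

/-- The basis has the bounded restricted truncation operator property:
`‖U(f,A)‖ ≤ C₀·‖f‖` for every greedy set `A` of `f`, where
`U(f,A) = (min_{n∈A} |x_n^*(f)|)·∑_{n∈A} sgn(x_n^*(f))·x_n`. -/
def BRTP {X : Type*} [NormedAddCommGroup X] [NormedSpace ℝ X]
    (x : ℕ → X) (xs : ℕ → X →L[ℝ] ℝ) : Prop :=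
  ∃ C₀ ≥ (1 : ℝ), ∀ (f : X) (A : Finset ℕ) (h : A.Nonempty),
    GreedySet (fun n => xs n f) A →
    ‖(A.inf' h fun n => |xs n f|) • ∑ n ∈ A, sgn (xs n f) • x n‖ ≤ C₀ * ‖f‖

/-- The basis is quasi-greedy: greedy projections are uniformly bounded. -/
def QuasiGreedyX {X : Type*} [NormedAddCommGroup X] [NormedSpace ℝ X]
    (x : ℕ → X) (xs : ℕ → X →L[ℝ] ℝ) : Prop :=
  ∃ C₀ ≥ (1 : ℝ), ∀ (f : X) (A : Finset ℕ), GreedySet (fun n => xs n f) A →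
    ‖∑ n ∈ A, xs n f • x n‖ ≤ C₀ * ‖f‖

section helpers

theorem aux_sgn (a : ℝ) : sgn a = 1 ∨ sgn a = -1 := by
  unfold sgn
  split_ifs with h
  · exact Or.inl rfl
  · rcases lt_or_gt_of_ne h with h' | h'
    · right; rw [abs_of_neg h']; field_simp
    · left; rw [abs_of_pos h']; field_simp

variable {X : Type*} [NormedAddCommGroup X] [NormedSpace ℝ X]

theorem aux_coef_s10 {x : ℕ → X} {xs : ℕ → X →L[ℝ] ℝ} (hb : IsXBasis x xs)
    (A : Finset ℕ) (c : ℕ → ℝ) (k : ℕ) :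
    xs k (∑ n ∈ A, c n • x n) = if k ∈ A then c k else 0 := by
  simp [map_sum, hb.biorth]

theorem aux_sub {x : ℕ → X} {xs : ℕ → X →L[ℝ] ℝ} (hb : IsXBasis x xs) {C₀ : ℝ}
    (hC : ∀ (f : X) (A : Finset ℕ) (h : A.Nonempty),
      GreedySet (fun n => xs n f) A →
      ‖(A.inf' h fun n => |xs n f|) • ∑ n ∈ A, sgn (xs n f) • x n‖ ≤ C₀ * ‖f‖)
    (hC0 : 1 ≤ C₀)
    (A B : Finset ℕ) (hBA : B ⊆ A) (ε : ℕ → ℝ) (hε : ∀ k, ε k = 1 ∨ ε k = -1) :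
    ‖∑ n ∈ B, ε n • x n‖ ≤ C₀ * ‖∑ n ∈ A, ε n • x n‖ := by
  rcases B.eq_empty_or_nonempty with rfl | hne
  · simp; positivity
  have habs : ∀ k, |ε k| = 1 := by
    intro k; rcases hε k with h | h <;> simp [h]
  have h1 : ∀ k ∈ B, xs k (∑ n ∈ A, ε n • x n) = ε k := by
    intro k hk
    rw [aux_coef_s10 hb, if_pos (hBA hk)]
  have key := hC (∑ n ∈ A, ε n • x n) B hne (by
    intro n hn k hk
    simp only []
    rw [h1 n hn, habs, aux_coef_s10 hb]
    split_ifs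
    · rw [habs]
    · simp)
  have h2 : (B.inf' hne fun n => |xs n (∑ n ∈ A, ε n • x n)|) = 1 := by
    rw [Finset.inf'_congr hne rfl (g := fun _ => (1:ℝ))]
    · simp
    · intro k hk; rw [h1 k hk, habs]
  have h3 : ∑ n ∈ B, sgn (xs n (∑ n ∈ A, ε n • x n)) • x n = ∑ n ∈ B, ε n • x n := by
    refine Finset.sum_congr rfl fun k hk => ?_
    rw [h1 k hk]
    rcases hε k with h | h <;> simp [h, sgn]
  rw [h2, h3, one_smul] at key
  exact key

theorem aux_sign {x : ℕ → X} {xs : ℕ → X →L[ℝ] ℝ} (hb : IsXBasis x xs) {C₀ : ℝ}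
    (hC : ∀ (f : X) (A : Finset ℕ) (h : A.Nonempty),
      GreedySet (fun n => xs n f) A →
      ‖(A.inf' h fun n => |xs n f|) • ∑ n ∈ A, sgn (xs n f) • x n‖ ≤ C₀ * ‖f‖)
    (hC0 : 1 ≤ C₀)
    (A : Finset ℕ) (ε δ : ℕ → ℝ) (hε : ∀ k, ε k = 1 ∨ ε k = -1)
    (hδ : ∀ k, δ k = 1 ∨ δ k = -1) :
    ‖∑ n ∈ A, δ n • x n‖ ≤ 2 * C₀ * ‖∑ n ∈ A, ε n • x n‖ := by
  classical
  rw [← Finset.sum_filter_add_sum_filter_not A (fun n => δ n = ε n) (fun n => δ n • x n)]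
  have e1 : ∑ n ∈ A.filter (fun n => δ n = ε n), δ n • x n
      = ∑ n ∈ A.filter (fun n => δ n = ε n), ε n • x n := by
    refine Finset.sum_congr rfl fun k hk => ?_
    rw [(Finset.mem_filter.1 hk).2]
  have e2 : ∑ n ∈ A.filter (fun n => ¬ δ n = ε n), δ n • x n
      = - ∑ n ∈ A.filter (fun n => ¬ δ n = ε n), ε n • x n := by
    rw [← Finset.sum_neg_distrib]
    refine Finset.sum_congr rfl fun k hk => ?_
    have := (Finset.mem_filter.1 hk).2
    rcases hε k with h | h <;> rcases hδ k with h' | h' <;> simp_all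
  rw [e1, e2]
  have a1 := aux_sub hb hC hC0 A _ (Finset.filter_subset (fun n => δ n = ε n) A) ε hε
  have a2 := aux_sub hb hC hC0 A _ (Finset.filter_subset (fun n => ¬ δ n = ε n) A) ε hε
  refine (norm_add_le _ _).trans ?_
  rw [norm_neg]
  linarith

theorem aux_sum_s10 (c s : ℕ → ℝ) (hs : ∀ m : ℕ, 1 ≤ m → 0 < s m) (M : ℝ)
    (h : ∀ A : Finset ℕ, A.Nonempty → ∀ t : ℝ, 0 ≤ t → (∀ n ∈ A, t ≤ |c n|) → t * s A.card ≤ M) :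
    ∀ (m : ℕ) (A : Finset ℕ), A.card = m →
      ∑ n ∈ A, (c n) ^ 2 ≤ M ^ 2 * ∑ n ∈ Finset.Icc 1 m, (s n)⁻¹ ^ 2 := by
  intro m
  induction m with
  | zero => intro A hA; simp [Finset.card_eq_zero.1 hA]
  | succ m ih =>
    intro A hA
    have hne : A.Nonempty := by rw [← Finset.card_pos]; omega
    obtain ⟨k, hk, hmin⟩ := Finset.exists_min_image A (fun n => |c n|) hne
    have h1 := h A hne |c k| (abs_nonneg _) hmin
    rw [hA] at h1
    have hpos := hs (m+1) (by omega)
    have h2 := ih (A.erase k) (by rw [Finset.card_erase_of_mem hk]; omega)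
    rw [← Finset.add_sum_erase A _ hk, Finset.sum_Icc_succ_top (by omega), mul_add]
    have h3 : c k ^ 2 ≤ M ^ 2 * (s (m+1))⁻¹ ^ 2 := by
      rw [← mul_pow, ← sq_abs (c k)]
      refine pow_le_pow_left₀ (abs_nonneg _) ?_ 2
      rw [← div_eq_mul_inv, le_div_iff₀ hpos]
      exact h1
    linarith

theorem aux_fin {x : ℕ → X} {xs : ℕ → X →L[ℝ] ℝ} (hb : IsXBasis x xs) (f : X) (t : ℝ)
    (ht : 0 < t) : {k | t ≤ |xs k f|}.Finite := by
  obtain ⟨b, hbb⟩ := hb.dual_ub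
  have hb0 : 0 ≤ b := (norm_nonneg _).trans (hbb 0)
  obtain ⟨A, c, hA⟩ := hb.dense f (t / (b + 1)) (by positivity)
  refine A.finite_toSet.subset fun k hk => ?_
  by_contra hkA
  have h0 := aux_coef_s10 hb A c k
  rw [if_neg (by simpa using hkA)] at h0
  have h1 : xs k f = xs k (f - ∑ n ∈ A, c n • x n) := by rw [map_sub, h0, sub_zero]
  have h2 : |xs k f| ≤ b * ‖f - ∑ n ∈ A, c n • x n‖ := by
    rw [h1, ← Real.norm_eq_abs]
    exact ((xs k).le_opNorm _).trans (mul_le_mul_of_nonneg_right (hbb k) (norm_nonneg _))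
  have h3 : t ≤ |xs k f| := hk
  rw [lt_div_iff₀ (by positivity)] at hA
  nlinarith [norm_nonneg (f - ∑ n ∈ A, c n • x n)]

end helpers

/-- Bootstrap lemma for GT spaces: if the basis has the bounded restricted
truncation operator property and `s_m ≤ K·φ_l(m)`, then
`m·(∑_{n=1}^m s_n⁻²)^(-1/2) ≤ C·φ_l(m)`. -/
theorem stmt10 {X : Type*} [NormedAddCommGroup X] [NormedSpace ℝ X] [CompleteSpace X]
    (hGT : IsGTSpace X) (x : ℕ → X) (xs : ℕ → X →L[ℝ] ℝ)
    (hbasis : IsXBasis x xs) (htrunc : BRTP x xs)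
    (s : ℕ → ℝ) (hs : ∀ m : ℕ, 1 ≤ m → 0 < s m)
    (K : ℝ) (hK : ∀ m : ℕ, 1 ≤ m → ∀ A : Finset ℕ, m ≤ A.card →
      s m ≤ K * ‖∑ n ∈ A, x n‖) :
    ∃ C : ℝ, ∀ m : ℕ, 1 ≤ m → ∀ A : Finset ℕ, m ≤ A.card →
      (m : ℝ) / Real.sqrt (∑ n ∈ Finset.Icc 1 m, (s n)⁻¹ ^ 2) ≤ C * ‖∑ n ∈ A, x n‖ := by
  obtain ⟨D, hD⟩ := hGT
  obtain ⟨C₀, hC0, hC⟩ := htrunc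
  have hK0 : 0 ≤ K := by
    have h1 := hK 1 le_rfl {0} (by simp)
    have h2 := hs 1 le_rfl
    by_contra hneg
    nlinarith [norm_nonneg (∑ n ∈ ({0} : Finset ℕ), x n)]
  have hC00 : 0 ≤ C₀ := by linarith
  have hone : ∀ A : Finset ℕ, ∑ n ∈ A, (fun _ => (1:ℝ)) n • x n = ∑ n ∈ A, x n := by
    intro A; simp
  -- coefficient bound
  have hM : ∀ (f : X) (A : Finset ℕ), A.Nonempty → ∀ t : ℝ, 0 ≤ t →
      (∀ n ∈ A, t ≤ |xs n f|) → t * s A.card ≤ K * (2 * C₀ * C₀) * ‖f‖ := by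
    intro f A hne t ht htA
    rcases ht.eq_or_lt with rfl | htpos
    · rw [zero_mul]; positivity
    set G := (aux_fin hbasis f t htpos).toFinset with hG
    have hmem : ∀ k, k ∈ G ↔ t ≤ |xs k f| := by intro k; simp [hG]
    have hAG : A ⊆ G := fun k hk => (hmem k).2 (htA k hk)
    have hGne : G.Nonempty := hne.mono hAG
    have h1 := hC f G hGne (by
      intro n hn k hk
      have a := (hmem n).1 hn
      have b : ¬ t ≤ |xs k f| := fun h => hk ((hmem k).2 h)
      simp only []
      linarith)
    have h2 : t ≤ G.inf' hGne fun n => |xs n f| := by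
      rw [Finset.le_inf'_iff]
      exact fun k hk => (hmem k).1 hk
    rw [norm_smul, Real.norm_eq_abs, abs_of_nonneg (ht.trans h2)] at h1
    have h3 : t * ‖∑ n ∈ G, sgn (xs n f) • x n‖ ≤ C₀ * ‖f‖ :=
      (mul_le_mul_of_nonneg_right h2 (norm_nonneg _)).trans h1
    have h4 := aux_sign hbasis hC hC0 G (fun n => sgn (xs n f)) (fun _ => 1)
      (fun k => aux_sgn _) (fun _ => Or.inl rfl)
    rw [hone] at h4
    have h5 := hK A.card (Finset.card_pos.2 hne) G (Finset.card_le_card hAG)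
    calc t * s A.card ≤ t * (K * (2 * C₀ * ‖∑ n ∈ G, sgn (xs n f) • x n‖)) := by gcongr; exact h5.trans (by gcongr)
      _ = K * (2 * C₀) * (t * ‖∑ n ∈ G, sgn (xs n f) • x n‖) := by ring
      _ ≤ K * (2 * C₀) * (C₀ * ‖f‖) := by gcongr
      _ = _ := by ring
  refine ⟨|D| * (K * (2 * C₀ * C₀)) * (2 * C₀) * C₀, ?_⟩
  intro m hm A' hA'
  obtain ⟨A, hAA', hAm⟩ := Finset.exists_subset_card_eq hA'
  set S := Real.sqrt (∑ n ∈ Finset.Icc 1 m, (s n)⁻¹ ^ 2) with hS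
  have hS0 : 0 ≤ S := Real.sqrt_nonneg _
  let T : X →L[ℝ] lp (fun _ : ℕ => ℝ) 2 :=
    ∑ n ∈ A, (xs n).smulRight (lp.single 2 n (1:ℝ))
  have hTf : ∀ f, T f = ∑ n ∈ A, lp.single 2 n (xs n f) := by
    intro f
    simp only [T, ContinuousLinearMap.sum_apply, ContinuousLinearMap.smulRight_apply]
    refine Finset.sum_congr rfl fun n _ => ?_
    rw [← lp.single_smul]; simp
  have hTn : ∀ f, ‖T f‖ ^ 2 = ∑ n ∈ A, (xs n f) ^ 2 := by
    intro f
    have := lp.norm_sum_single (E := fun _ : ℕ => ℝ) (p := 2) (by norm_num) (fun n => xs n f) A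
    rw [hTf]
    simpa using this
  have hT : ‖T‖ ≤ K * (2 * C₀ * C₀) * S := by
    refine T.opNorm_le_bound (by positivity) fun f => ?_
    refine le_of_sq_le_sq ?_ (by positivity)
    rw [hTn]
    refine (aux_sum_s10 (fun n => xs n f) s hs _ (hM f) m A hAm).trans (le_of_eq ?_)
    have : S ^ 2 = ∑ n ∈ Finset.Icc 1 m, (s n)⁻¹ ^ 2 :=
      Real.sq_sqrt (Finset.sum_nonneg fun _ _ => sq_nonneg _)
    rw [← this]; ring
  obtain ⟨ε, hε, hsum⟩ := hD T A x
  have hTx : ∀ k ∈ A, ‖T (x k)‖ = 1 := by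
    intro k hk
    have := hTn (x k)
    simp [hbasis.biorth, hk] at this
    rcases this with h | h
    · exact h
    · linarith [norm_nonneg (T (x k))]
  rw [Finset.sum_congr rfl hTx] at hsum
  simp only [Finset.sum_const, hAm, nsmul_eq_mul, mul_one] at hsum
  have g1 := aux_sign hbasis hC hC0 A (fun _ => 1) ε (fun _ => Or.inl rfl) hε
  have g2 := aux_sub hbasis hC hC0 A' A hAA' (fun _ => 1) (fun _ => Or.inl rfl)
  rw [hone] at g1
  rw [hone, hone] at g2
  refine div_le_of_le_mul₀ hS0 (by positivity) ?_
  calc (m : ℝ) ≤ D * ‖T‖ * ‖∑ k ∈ A, ε k • x k‖ := hsum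
    _ ≤ |D| * (K * (2 * C₀ * C₀) * S) * (2 * C₀ * (C₀ * ‖∑ n ∈ A', x n‖)) := by
        have : D ≤ |D| := le_abs_self D
        have g3 := g1.trans (mul_le_mul_of_nonneg_left g2 (by positivity))
        gcongr
    _ = _ := by ring
end
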